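/- There is a constant c > 0 such that for every n ≥ 1, the number of orbits of the conjugation action of G_n on M_n satisfies e^{-cn}·n^n ≤ (number of orbits) ≤ e^{cn}·n^n. Equivalently, the number of isomorphism classes of trivalent multigraphs with 2n vertices is n^n up to a factor exponential in n. -/

import Mathlib

/-- The set of fixed-point-free involutions of the half-edge set `Fin (2n) × Fin 3`,
encoding trivalent multigraphs on `2n` labeled vertices. -/
def Mset (n : ℕ) : Set (Equiv.Perm (Fin (2 * n) × Fin 3)) :=
  {f | f * f = 1 ∧ ∀ x, f x ≠ x}

/-- The group (as a set) of permutations of the half-edges that respect vertices: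
`σ` belongs to `Gset n` if there is a permutation `π` of the vertices such that the
vertex of `σ (v, i)` is `π v` for all half-edges `(v, i)`. -/
def Gset (n : ℕ) : Set (Equiv.Perm (Fin (2 * n) × Fin 3)) :=
  {σ | ∃ π : Equiv.Perm (Fin (2 * n)), ∀ p : Fin (2 * n) × Fin 3, (σ p).1 = π p.1}

/-- The set of orbits of the conjugation action of `Gset n` on `Mset n`. -/
def OrbitsSet (n : ℕ) : Set (Set (Equiv.Perm (Fin (2 * n) × Fin 3))) :=
  {S | ∃ f ∈ Mset n, S = {g | ∃ σ ∈ Gset n, σ * f * σ⁻¹ = g}}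


/-- Every self-map of a finite set admits an injective rational labelling and a splitting into
two parts on each of which it is monotone. -/
theorem good_order {V : Type*} [DecidableEq V] (g : V → V) :
    ∀ (k : ℕ) (S : Finset V), S.card = k → (∀ a ∈ S, g a ∈ S) →
      ∃ (h : V → ℚ) (E : Set V), Set.InjOn h S ∧
        ∀ a ∈ S, ∀ b ∈ S, (a ∈ E ↔ b ∈ E) → h a < h b → h (g a) ≤ h (g b) := by
  classical
  intro k
  induction k using Nat.strong_induction_on with
  | _ k ih =>
  intro S hS hg
  by_cases hne : S.Nonempty
  swap
  · rw [Finset.not_nonempty_iff_eq_empty] at hne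
    subst hne
    exact ⟨fun _ => 0, ∅, by simp, by simp⟩
  by_cases hleaf : ∃ v ∈ S, ∀ a ∈ S, g a ≠ v
  · obtain ⟨v, hv, hleaf⟩ := hleaf
    have hinv : ∀ a ∈ S.erase v, g a ∈ S.erase v := by
      intro a ha
      have ha' := Finset.mem_of_mem_erase ha
      exact Finset.mem_erase.2 ⟨hleaf a ha', hg a ha'⟩
    have hcard : (S.erase v).card < k := by
      rw [← hS]; exact Finset.card_erase_lt_of_mem hv
    obtain ⟨h, E, hinj, hmono⟩ := ih _ hcard (S.erase v) rfl hinv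
    set T := S.erase v with hT
    have hgv : g v ∈ T := Finset.mem_erase.2 ⟨hleaf v hv, hg v hv⟩
    let A : Finset ℚ := (T.filter (fun a => a ∉ E ∧ h (g a) ≤ h (g v))).image h
    let B : Finset ℚ := (T.filter (fun a => a ∉ E ∧ h (g v) < h (g a))).image h
    have hAB : ∀ x ∈ A, ∀ y ∈ B, x < y := by
      intro x hx y hy
      simp only [A, B, Finset.mem_image, Finset.mem_filter] at hx hy
      obtain ⟨a, ⟨ha, haE, ha2⟩, rfl⟩ := hx
      obtain ⟨b, ⟨hb, hbE, hb2⟩, rfl⟩ := hy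
      by_contra hcon
      rcases lt_or_eq_of_le (not_lt.1 hcon) with hlt | heq
      · have := hmono b hb a ha (by simp [haE, hbE]) hlt
        linarith
      · have : b = a := hinj hb ha heq
        subst this
        linarith
    obtain ⟨m, hmA, hmB⟩ := Order.exists_between_finsets A B hAB
    obtain ⟨m', hmA', hmB'⟩ := Order.exists_between_finsets (insert m A) B (by
      intro x hx y hy
      rcases Finset.mem_insert.1 hx with rfl | hx
      · exact hmB y hy
      · exact hAB x hx y hy)
    have hmm : m < m' := hmA' m (Finset.mem_insert_self _ _)
    obtain ⟨q, hq, hqT⟩ := (Set.Ioo_infinite hmm).exists_notMem_finset (T.image h)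
    have hqA : ∀ x ∈ A, x < q := fun x hx => (hmA x hx).trans hq.1
    have hqB : ∀ x ∈ B, q < x := fun x hx => hq.2.trans (hmB' x hx)
    have hupd : ∀ a ∈ T, Function.update h v q a = h a := by
      intro a ha
      exact Function.update_of_ne (Finset.ne_of_mem_erase ha) _ _
    have hcase : ∀ a ∈ S, a = v ∨ a ∈ T := by
      intro a ha
      by_cases hav : a = v
      · exact Or.inl hav
      · exact Or.inr (Finset.mem_erase.2 ⟨hav, ha⟩)
    have hgT : ∀ a ∈ S, g a ∈ T := fun a ha => Finset.mem_erase.2 ⟨hleaf a ha, hg a ha⟩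
    refine ⟨Function.update h v q, E \ {v}, ?_, ?_⟩
    · intro a ha b hb hab
      rcases hcase a ha with rfl | haT <;> rcases hcase b hb with rfl | hbT
      · rfl
      · rw [hupd b hbT, Function.update_self] at hab
        exact absurd (Finset.mem_image.2 ⟨b, hbT, hab.symm⟩) hqT
      · rw [hupd a haT, Function.update_self] at hab
        exact absurd (Finset.mem_image.2 ⟨a, haT, hab⟩) hqT
      · rw [hupd a haT, hupd b hbT] at hab
        exact hinj haT hbT hab
    · intro a ha b hb hE hlt
      rw [hupd _ (hgT a ha), hupd _ (hgT b hb)]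
      rcases hcase a ha with rfl | haT <;> rcases hcase b hb with rfl | hbT
      · exact le_rfl
      · rw [hupd b hbT, Function.update_self] at hlt
        have hbv := Finset.ne_of_mem_erase hbT
        have hbE : b ∉ E := by simpa [hbv] using hE
        by_contra hcon
        have : h b ∈ A := Finset.mem_image.2 ⟨b, Finset.mem_filter.2
          ⟨hbT, hbE, (not_le.1 hcon).le⟩, rfl⟩
        exact absurd (hqA _ this) (not_lt.2 hlt.le)
      · rw [hupd a haT, Function.update_self] at hlt
        have hbv := Finset.ne_of_mem_erase haT
        have hbE : a ∉ E := by simpa [hbv] using hE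
        by_contra hcon
        have : h a ∈ B := Finset.mem_image.2 ⟨a, Finset.mem_filter.2
          ⟨haT, hbE, not_le.1 hcon⟩, rfl⟩
        exact absurd (hqB _ this) (not_lt.2 hlt.le)
      · rw [hupd a haT, hupd b hbT] at hlt
        have h1 := Finset.ne_of_mem_erase haT
        have h2 := Finset.ne_of_mem_erase hbT
        exact hmono a haT b hbT (by simpa [h1, h2] using hE) hlt
  · push Not at hleaf
    have himg : S.image g = S := by
      apply Finset.Subset.antisymm
      · intro x hx
        obtain ⟨a, ha, rfl⟩ := Finset.mem_image.1 hx
        exact hg a ha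
      · intro x hx
        obtain ⟨a, ha, rfl⟩ := hleaf x hx
        exact Finset.mem_image_of_mem _ ha
    have ginj : Set.InjOn g S := Finset.card_image_iff.1 (by rw [himg])
    obtain ⟨v, hv⟩ := hne
    have hitS : ∀ i : ℕ, g^[i] v ∈ S := by
      intro i
      induction i with
      | zero => exact hv
      | succ i hi => rw [Function.iterate_succ_apply']; exact hg _ hi
    let C : Finset V := S.filter (fun c => ∃ i : ℕ, g^[i] v = c)
    have hCS : C ⊆ S := Finset.filter_subset _ _
    have hvC : v ∈ C := Finset.mem_filter.2 ⟨hv, 0, rfl⟩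
    have hgC : ∀ c ∈ C, g c ∈ C := by
      intro c hc
      obtain ⟨hcS, i, hi⟩ := Finset.mem_filter.1 hc
      exact Finset.mem_filter.2 ⟨hg c hcS, i + 1, by rw [Function.iterate_succ_apply', hi]⟩
    have hCimg : C.image g = C := by
      apply Finset.eq_of_subset_of_card_le
      · intro x hx
        obtain ⟨a, ha, rfl⟩ := Finset.mem_image.1 hx
        exact hgC a ha
      · rw [Finset.card_image_of_injOn (ginj.mono (by exact_mod_cast hCS))]
    set T := S \ C with hT
    have hgT : ∀ a ∈ T, g a ∈ T := by
      intro a ha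
      obtain ⟨haS, haC⟩ := Finset.mem_sdiff.1 ha
      refine Finset.mem_sdiff.2 ⟨hg a haS, fun hc => haC ?_⟩
      rw [← hCimg] at hc
      obtain ⟨c, hc, hca⟩ := Finset.mem_image.1 hc
      have : c = a := ginj (hCS hc) haS hca
      exact this ▸ hc
    have hcard : T.card < k := by
      rw [← hS]
      exact Finset.card_lt_card (Finset.sdiff_ssubset hCS ⟨v, hvC⟩)
    obtain ⟨h, E, hinj, hmono⟩ := ih _ hcard T rfl hgT
    obtain ⟨M, hM⟩ : ∃ M : ℚ, ∀ x ∈ T.image h, x < M := by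
      obtain ⟨M, hM, -⟩ := Order.exists_between_finsets (T.image h) ∅ (by simp)
      exact ⟨M, hM⟩
    have hM' : ∀ a ∈ T, h a < M := fun a ha => hM _ (Finset.mem_image_of_mem _ ha)
    have hidx : ∀ c : V, ∃ i : ℕ, c ∈ C → (g^[i] v = c ∧ ∀ j, g^[j] v = c → i ≤ j) := by
      intro c
      by_cases hc : c ∈ C
      · have hex := (Finset.mem_filter.1 hc).2
        exact ⟨Nat.find hex, fun _ => ⟨Nat.find_spec hex, fun j hj => Nat.find_min' hex hj⟩⟩
      · exact ⟨0, fun h => absurd h hc⟩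
    choose idx hidx using hidx
    let h' : V → ℚ := fun a => if a ∈ C then M + idx a else h a
    have hh'C : ∀ a ∈ C, h' a = M + idx a := fun a ha => if_pos ha
    have hh'T : ∀ a ∈ T, h' a = h a := fun a ha => if_neg (Finset.mem_sdiff.1 ha).2
    have hTC : ∀ a ∈ T, ∀ b ∈ C, h' a < h' b := by
      intro a ha b hb
      rw [hh'C b hb, hh'T a ha]
      have := hM' a ha
      have h0 : (0 : ℚ) ≤ idx b := Nat.cast_nonneg _
      linarith
    have hcase : ∀ a ∈ S, a ∈ C ∨ a ∈ T := by
      intro a ha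
      by_cases hav : a ∈ C
      · exact Or.inl hav
      · exact Or.inr (Finset.mem_sdiff.2 ⟨ha, hav⟩)
    refine ⟨h', {a | (a ∈ T ∧ a ∈ E) ∨ (a ∈ C ∧ g a = v)}, ?_, ?_⟩
    · intro a ha b hb hab
      rcases hcase a ha with haC | haT <;> rcases hcase b hb with hbC | hbT
      · rw [hh'C a haC, hh'C b hbC] at hab
        have : idx a = idx b := by
          have : (idx a : ℚ) = idx b := by linarith
          exact_mod_cast this
        rw [← (hidx a haC).1, ← (hidx b hbC).1, this]
      · exact absurd hab (hTC b hbT a haC).ne'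
      · exact absurd hab (hTC a haT b hbC).ne
      · rw [hh'T a haT, hh'T b hbT] at hab
        exact hinj haT hbT hab
    · intro a ha b hb hE hlt
      rcases hcase a ha with haC | haT <;> rcases hcase b hb with hbC | hbT
      · have haT : a ∉ T := fun h => (Finset.mem_sdiff.1 h).2 haC
        have hbT : b ∉ T := fun h => (Finset.mem_sdiff.1 h).2 hbC
        have hE' : g a = v ↔ g b = v := by simpa [haT, hbT, haC, hbC] using hE
        by_cases hbv : g b = v
        · rw [hbv, hE'.2 hbv]
        · rw [hh'C a haC, hh'C b hbC] at hlt
          have hlt' : idx a < idx b := by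
            have : (idx a : ℚ) < idx b := by linarith
            exact_mod_cast this
          rw [hh'C _ (hgC a haC), hh'C _ (hgC b hbC)]
          have h1 : idx (g a) ≤ idx a + 1 := (hidx _ (hgC a haC)).2 _ (by
            rw [Function.iterate_succ_apply', (hidx a haC).1])
          have h2 : idx b + 1 ≤ idx (g b) := by
            have h3 := (hidx _ (hgC b hbC)).1
            cases hj : idx (g b) with
            | zero => rw [hj] at h3; exact absurd h3.symm hbv
            | succ j =>
              rw [hj, Function.iterate_succ_apply'] at h3
              have := (hidx b hbC).2 j (ginj (hitS j) hb h3)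
              omega
          have : idx (g a) ≤ idx (g b) := by omega
          have : (idx (g a) : ℚ) ≤ idx (g b) := by exact_mod_cast this
          linarith
      · exact absurd hlt (hTC b hbT a haC).not_gt
      · exact (hTC _ (hgT a haT) _ (hgC b hbC)).le
      · have haC := (Finset.mem_sdiff.1 haT).2
        have hbC := (Finset.mem_sdiff.1 hbT).2
        rw [hh'T a haT, hh'T b hbT] at hlt
        rw [hh'T _ (hgT a haT), hh'T _ (hgT b hbT)]
        exact hmono a haT b hbT (by simpa [haT, hbT, haC, hbC] using hE) hlt

/-- Normal form of self-maps of `Fin N` up to relabelling. -/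
theorem function_normal_form {N : ℕ} [NeZero N] (g : Fin N → Fin N) :
    ∃ (s : Equiv.Perm (Fin N)) (E : Set (Fin N)) (m₁ m₂ : Fin N →o Fin N),
      ∀ v, (v ∈ E → s.symm (g (s v)) = m₁ v) ∧ (v ∉ E → s.symm (g (s v)) = m₂ v) := by
  obtain ⟨h, E, hinj, hmono⟩ := good_order g _ Finset.univ rfl (by simp)
  have hinj' : Function.Injective h := by
    intro a b hab
    exact hinj (by simp) (by simp) hab
  set s := Tuple.sort h with hs
  have hsm : StrictMono (h ∘ s) :=
    (Tuple.monotone_sort h).strictMono_of_injective (hinj'.comp s.injective)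
  set g' : Fin N → Fin N := fun v => s.symm (g (s v)) with hg'
  have key : ∀ a b, (s a ∈ E ↔ s b ∈ E) → a ≤ b → g' a ≤ g' b := by
    intro a b hE hab
    rcases hab.eq_or_lt with rfl | hlt
    · exact le_rfl
    · have := hmono (s a) (by simp) (s b) (by simp) hE (hsm hlt)
      rw [← hsm.le_iff_le]
      simpa [hg'] using this
  have e1 : MonotoneOn g' {v | s v ∈ E} := fun a ha b hb hab =>
    key a b ⟨fun _ => hb, fun _ => ha⟩ hab
  have e2 : MonotoneOn g' {v | s v ∉ E} := fun a ha b hb hab =>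
    key a b ⟨fun h => absurd h ha, fun h => absurd h hb⟩ hab
  obtain ⟨m₁, hm₁, he₁⟩ := e1.exists_monotone_extension (Set.toFinite _).bddBelow
    (Set.toFinite _).bddAbove
  obtain ⟨m₂, hm₂, he₂⟩ := e2.exists_monotone_extension (Set.toFinite _).bddBelow
    (Set.toFinite _).bddAbove
  exact ⟨s, {v | s v ∈ E}, ⟨m₁, hm₁⟩, ⟨m₂, hm₂⟩, fun v => ⟨fun hv => he₁ hv, fun hv => he₂ hv⟩⟩

theorem card_orderHom_le (N : ℕ) : Nat.card (Fin N →o Fin N) ≤ 2 ^ (2 * N) := by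
  let F : (Fin N →o Fin N) → Fin N → Fin (2 * N) := fun m i => ⟨i + m i, by omega⟩
  have hF : ∀ m, StrictMono (F m) := by
    intro m a b hab
    have h1 : (m a : ℕ) ≤ m b := m.monotone hab.le
    have h2 : (a : ℕ) < b := hab
    show (a : ℕ) + m a < b + m b
    omega
  have hinj : Function.Injective (fun m => Set.range (F m)) := by
    intro m m' hmm
    have := (StrictMono.range_inj (hF m) (hF m')).1 hmm
    ext i
    have := congrArg Fin.val (congrFun this i)
    simp only [F] at this
    omega
  have := Nat.card_le_card_of_injective _ hinj
  simpa using this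

/-- Hall: each vertex can be assigned one of its edges, injectively. -/
theorem hall_choice {n : ℕ} {f : Equiv.Perm (Fin (2 * n) × Fin 3)} (hf : f ∈ Mset n) :
    ∃ o : Fin (2 * n) → Fin 3, ∀ v w, f (v, o v) ≠ (w, o w) := by
  classical
  obtain ⟨hff, hfx⟩ := hf
  have hff' : ∀ x, f (f x) = x := fun x => by
    have := congrArg (fun p => p x) hff
    simpa using this
  let r : Fin (2 * n) × Fin 3 → Sym2 (Fin (2 * n) × Fin 3) := fun x => s(x, f x)
  let t : Fin (2 * n) → Finset (Sym2 (Fin (2 * n) × Fin 3)) :=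
    fun v => Finset.univ.image (fun i => r (v, i))
  have hall : ∀ s : Finset (Fin (2 * n)), s.card ≤ (s.biUnion t).card := by
    intro s
    have h1 := Finset.card_le_mul_card_image (f := r) (s ×ˢ (Finset.univ : Finset (Fin 3))) 2 (by
      intro b hb
      obtain ⟨x, hx, rfl⟩ := Finset.mem_image.1 hb
      refine (Finset.card_le_card (t := {x, f x}) ?_).trans Finset.card_le_two
      intro y hy
      have := (Finset.mem_filter.1 hy).2
      simp only [r, Sym2.eq_iff] at this
      rcases this with h | h
      · simp [h.1]
      · simp [h.1])
    have h2 : (s ×ˢ (Finset.univ : Finset (Fin 3))).image r ⊆ s.biUnion t := by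
      intro b hb
      obtain ⟨x, hx, rfl⟩ := Finset.mem_image.1 hb
      refine Finset.mem_biUnion.2 ⟨x.1, (Finset.mem_product.1 hx).1, ?_⟩
      exact Finset.mem_image.2 ⟨x.2, Finset.mem_univ _, rfl⟩
    have h3 := Finset.card_le_card h2
    rw [Finset.card_product, Finset.card_univ, Fintype.card_fin] at h1
    omega
  obtain ⟨c, hc, hct⟩ := (Finset.all_card_le_biUnion_card_iff_exists_injective t).1 hall
  have : ∀ v, ∃ i, r (v, i) = c v := fun v => by
    obtain ⟨i, -, hi⟩ := Finset.mem_image.1 (hct v)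
    exact ⟨i, hi⟩
  choose o ho using this
  refine ⟨o, fun v w hvw => ?_⟩
  have : c v = c w := by
    rw [← ho v, ← ho w]
    simp only [r]
    rw [← hvw, hff', Sym2.eq_swap]
  have hvw' := hc this
  subst hvw'
  exact hfx _ hvw

theorem Gset_mul {n : ℕ} {a b : Equiv.Perm (Fin (2 * n) × Fin 3)} (ha : a ∈ Gset n)
    (hb : b ∈ Gset n) : a * b ∈ Gset n := by
  obtain ⟨p, hp⟩ := ha
  obtain ⟨q, hq⟩ := hb
  exact ⟨p * q, fun x => by simp [hp, hq]⟩

theorem Gset_inv {n : ℕ} {a : Equiv.Perm (Fin (2 * n) × Fin 3)} (ha : a ∈ Gset n) :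
    a⁻¹ ∈ Gset n := by
  obtain ⟨p, hp⟩ := ha
  refine ⟨p⁻¹, fun x => ?_⟩
  have := hp (a⁻¹ x)
  rw [Equiv.Perm.eq_inv_iff_eq, ← this]
  simp

theorem orbit_eq {n : ℕ} {σ f : Equiv.Perm (Fin (2 * n) × Fin 3)} (hσ : σ ∈ Gset n) :
    {g | ∃ τ ∈ Gset n, τ * f * τ⁻¹ = g} = {g | ∃ τ ∈ Gset n, τ * (σ * f * σ⁻¹) * τ⁻¹ = g} := by
  ext g
  constructor
  · rintro ⟨τ, hτ, rfl⟩
    exact ⟨τ * σ⁻¹, Gset_mul hτ (Gset_inv hσ), by group⟩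
  · rintro ⟨τ, hτ, rfl⟩
    exact ⟨τ * σ, Gset_mul hτ hσ, by group⟩

theorem Mset_conj {n : ℕ} {σ f : Equiv.Perm (Fin (2 * n) × Fin 3)} (hf : f ∈ Mset n) :
    σ * f * σ⁻¹ ∈ Mset n := by
  obtain ⟨h1, h2⟩ := hf
  refine ⟨?_, fun x hx => h2 (σ⁻¹ x) ?_⟩
  · calc σ * f * σ⁻¹ * (σ * f * σ⁻¹) = σ * (f * f) * σ⁻¹ := by group
      _ = 1 := by rw [h1]; group
  · have : σ (f (σ⁻¹ x)) = x := hx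
    rw [← Equiv.Perm.eq_inv_iff_eq] at this
    exact this

/-- Every orbit contains a representative in normal form. -/
theorem exists_normal {n : ℕ} [NeZero (2 * n)] {f : Equiv.Perm (Fin (2 * n) × Fin 3)}
    (hf : f ∈ Mset n) :
    ∃ σ ∈ Gset n, ∃ (E : Set (Fin (2 * n))) (m₁ m₂ : Fin (2 * n) →o Fin (2 * n)),
      ∀ v, ((σ * f * σ⁻¹) (v, 0)).2 ≠ 0 ∧
        (v ∈ E → ((σ * f * σ⁻¹) (v, 0)).1 = m₁ v) ∧
        (v ∉ E → ((σ * f * σ⁻¹) (v, 0)).1 = m₂ v) := by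
  obtain ⟨o, ho⟩ := hall_choice hf
  let τ : Equiv.Perm (Fin (2 * n) × Fin 3) :=
    ⟨fun x => (x.1, Equiv.swap 0 (o x.1) x.2), fun x => (x.1, Equiv.swap 0 (o x.1) x.2),
      fun x => by simp, fun x => by simp⟩
  have hτ0 : ∀ v, τ (v, 0) = (v, o v) := fun v => by simp [τ]
  have hττ : ∀ x, τ (τ x) = x := fun x => by simp [τ]
  obtain ⟨s, E, m₁, m₂, hm⟩ := function_normal_form (fun v => (f (v, o v)).1)
  let ρ : Equiv.Perm (Fin (2 * n) × Fin 3) := Equiv.prodCongr s.symm (Equiv.refl _)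
  have hτG : τ ∈ Gset n := ⟨1, fun x => rfl⟩
  have hρG : ρ ∈ Gset n := ⟨s.symm, fun x => rfl⟩
  have hτinv : τ⁻¹ = τ := by
    ext1 x
    rw [Equiv.Perm.inv_eq_iff_eq, hττ]
  have hval : ∀ v, ((ρ * τ) * f * (ρ * τ)⁻¹) (v, 0) = ρ (τ (f (s v, o (s v)))) := by
    intro v
    rw [mul_inv_rev, hτinv]
    have : ρ⁻¹ (v, 0) = (s v, 0) := by
      rw [Equiv.Perm.inv_eq_iff_eq]; simp [ρ]
    simp only [Equiv.Perm.mul_apply, this, hτ0]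
  refine ⟨ρ * τ, Gset_mul hρG hτG, E, m₁, m₂, fun v => ⟨?_, ?_, ?_⟩⟩
  · rw [hval]
    intro h0
    have h1 : (τ (f (s v, o (s v)))).2 = 0 := h0
    set y := τ (f (s v, o (s v))) with hy
    have h2 : f (s v, o (s v)) = τ y := by rw [hy, hττ]
    have h3 : y = (y.1, 0) := by rw [← h1]
    rw [h3, hτ0] at h2
    exact ho _ _ h2
  · rw [hval]
    intro hv
    exact (hm v).1 hv
  · rw [hval]
    intro hv
    exact (hm v).2 hv

theorem exists_enum {H : Type*} [Inhabited H] (n : ℕ) (A : Finset H) :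
    ∃ e : Fin n → H, A.card ≤ n → ∀ x ∈ A, ∃ i, e i = x := by
  refine ⟨fun i => A.toList.getD i default, fun hA x hx => ?_⟩
  obtain ⟨i, hi, hix⟩ := List.getElem_of_mem (Finset.mem_toList.2 hx)
  rw [Finset.length_toList] at hi
  refine ⟨⟨i, hi.trans_le hA⟩, ?_⟩
  simp [hi, hix]

/-- Two matchings agreeing on a set of half-edges that meets every edge are equal. -/
theorem eq_of_agree {n : ℕ} {f g : Equiv.Perm (Fin (2 * n) × Fin 3)} (hf : f ∈ Mset n)
    (hg : g ∈ Mset n) (Y : Set (Fin (2 * n) × Fin 3)) (hY : ∀ x, x ∈ Y ∨ f x ∈ Y)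
    (hfg : ∀ y ∈ Y, f y = g y) : f = g := by
  have hff : ∀ x, f (f x) = x := fun x => by
    simpa using congrArg (fun p => p x) hf.1
  have hgg : ∀ x, g (g x) = x := fun x => by
    simpa using congrArg (fun p => p x) hg.1
  ext1 x
  rcases hY x with h | h
  · exact hfg x h
  · have := hfg _ h
    rw [hff] at this
    have h2 := congrArg g this
    rw [hgg] at h2
    exact h2.symm

/-- For a matching in normal form, a set of at most `n` half-edges covering the edges not
containing a half-edge of index `0`. -/
theorem exists_rest {n : ℕ} {f : Equiv.Perm (Fin (2 * n) × Fin 3)} (hf : f ∈ Mset n)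
    (h0 : ∀ v, (f (v, 0)).2 ≠ 0) :
    ∃ A : Finset (Fin (2 * n) × Fin 3), A.card ≤ n ∧
      ∀ x, (x.2 = 0 ∨ x ∈ A) ∨ ((f x).2 = 0 ∨ f x ∈ A) := by
  classical
  have hff : ∀ x, f (f x) = x := fun x => by
    simpa using congrArg (fun p => p x) hf.1
  have h0' : ∀ x : Fin (2 * n) × Fin 3, x.2 = 0 → (f x).2 ≠ 0 := by
    rintro ⟨v, i⟩ hi
    simp only at hi
    subst hi
    exact h0 v
  let k : Fin (2 * n) × Fin 3 → Fin (2 * n) ×ₗ Fin 3 := toLex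
  have hk : ∀ x, k x ≠ k (f x) := fun x hx => hf.2 x (toLex.injective hx).symm
  let A : Finset (Fin (2 * n) × Fin 3) :=
    Finset.univ.filter (fun x => x.2 ≠ 0 ∧ (f x).2 ≠ 0 ∧ k x < k (f x))
  let Z : Finset (Fin (2 * n) × Fin 3) := Finset.univ.filter (fun x => x.2 = 0)
  refine ⟨A, ?_, ?_⟩
  · have hZ : Z.card = 2 * n := by
      have : Z = Finset.univ.image (fun v : Fin (2 * n) => (v, (0 : Fin 3))) := by
        ext ⟨v, i⟩
        simp [Z, eq_comm]
      rw [this, Finset.card_image_of_injective _ (by intro a b hab; simpa using hab)]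
      simp
    have d1 : Disjoint Z (Z.image f) := by
      rw [Finset.disjoint_left]
      intro x hx hx'
      obtain ⟨y, hy, rfl⟩ := Finset.mem_image.1 hx'
      exact h0' y (Finset.mem_filter.1 hy).2 (Finset.mem_filter.1 hx).2
    have d2 : Disjoint A (A.image f) := by
      rw [Finset.disjoint_left]
      intro x hx hx'
      obtain ⟨y, hy, rfl⟩ := Finset.mem_image.1 hx'
      have h1 := (Finset.mem_filter.1 hy).2.2.2
      have h2 := (Finset.mem_filter.1 hx).2.2.2
      rw [hff] at h2
      exact lt_asymm h1 h2
    have d3 : Disjoint (Z ∪ Z.image f) (A ∪ A.image f) := by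
      rw [Finset.disjoint_left]
      intro x hx hx'
      have e1 : x.2 = 0 ∨ (f x).2 = 0 := by
        rcases Finset.mem_union.1 hx with h | h
        · exact Or.inl (Finset.mem_filter.1 h).2
        · obtain ⟨y, hy, rfl⟩ := Finset.mem_image.1 h
          rw [hff]
          exact Or.inr (Finset.mem_filter.1 hy).2
      have e2 : x.2 ≠ 0 ∧ (f x).2 ≠ 0 := by
        rcases Finset.mem_union.1 hx' with h | h
        · exact ⟨(Finset.mem_filter.1 h).2.1, (Finset.mem_filter.1 h).2.2.1⟩
        · obtain ⟨y, hy, rfl⟩ := Finset.mem_image.1 h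
          rw [hff]
          exact ⟨(Finset.mem_filter.1 hy).2.2.1, (Finset.mem_filter.1 hy).2.1⟩
      tauto
    have hc := Finset.card_le_univ ((Z ∪ Z.image f) ∪ (A ∪ A.image f))
    rw [Finset.card_union_of_disjoint d3, Finset.card_union_of_disjoint d1,
      Finset.card_union_of_disjoint d2, Finset.card_image_of_injective _ f.injective,
      Finset.card_image_of_injective _ f.injective, hZ, Fintype.card_prod, Fintype.card_fin,
      Fintype.card_fin] at hc
    omega
  · intro x
    by_cases h1 : x.2 = 0
    · exact Or.inl (Or.inl h1)
    by_cases h2 : (f x).2 = 0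
    · exact Or.inr (Or.inl h2)
    rcases lt_or_gt_of_ne (hk x) with h | h
    · exact Or.inl (Or.inr (Finset.mem_filter.2 ⟨Finset.mem_univ _, h1, h2, h⟩))
    · refine Or.inr (Or.inr (Finset.mem_filter.2 ⟨Finset.mem_univ _, h2, ?_, ?_⟩))
      · rw [hff]; exact h1
      · rw [hff]; exact h

theorem orbits_upper (n : ℕ) (hn : 1 ≤ n) :
    Nat.card (OrbitsSet n) ≤ 3538944 ^ n * n ^ n := by
  classical
  have : NeZero (2 * n) := ⟨by omega⟩
  have : Inhabited (Fin (2 * n) × Fin 3) := ⟨(0, 0)⟩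
  choose enum henum using fun A : Finset (Fin (2 * n) × Fin 3) => exists_enum n A
  have hex : ∀ S : OrbitsSet n, ∃ f ∈ Mset n,
      (S : Set _) = {g | ∃ σ ∈ Gset n, σ * f * σ⁻¹ = g} ∧
      ∃ (E : Set (Fin (2 * n))) (m₁ m₂ : Fin (2 * n) →o Fin (2 * n))
        (A : Finset (Fin (2 * n) × Fin 3)),
        (∀ v, (v ∈ E → (f (v, 0)).1 = m₁ v) ∧ (v ∉ E → (f (v, 0)).1 = m₂ v)) ∧
        A.card ≤ n ∧ ∀ x, (x.2 = 0 ∨ x ∈ A) ∨ ((f x).2 = 0 ∨ f x ∈ A) := by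
    rintro ⟨S, f, hf, rfl⟩
    obtain ⟨σ, hσ, E, m₁, m₂, h⟩ := exists_normal hf
    obtain ⟨A, hA, hA'⟩ := exists_rest (Mset_conj (σ := σ) hf) (fun v => (h v).1)
    exact ⟨σ * f * σ⁻¹, Mset_conj hf, orbit_eq hσ, E, m₁, m₂, A, fun v => (h v).2, hA, hA'⟩
  choose F hFM hFS E m₁ m₂ A hE hA hcov using hex
  let code : OrbitsSet n → Set (Fin (2 * n)) × (Fin (2 * n) →o Fin (2 * n)) ×
      (Fin (2 * n) →o Fin (2 * n)) × (Fin (2 * n) → Fin 3) ×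
      Finset (Fin (2 * n) × Fin 3) × (Fin n → Fin (2 * n) × Fin 3) :=
    fun S => (E S, m₁ S, m₂ S, fun v => (F S (v, 0)).2, A S, fun i => F S (enum (A S) i))
  have hinj : Function.Injective code := by
    intro S T hST
    simp only [code, Prod.mk.injEq] at hST
    obtain ⟨e1, e2, e3, e4, e5, e6⟩ := hST
    have hF : F S = F T := by
      refine eq_of_agree (hFM S) (hFM T) {x | x.2 = 0 ∨ x ∈ A S} (hcov S) ?_
      rintro ⟨v, i⟩ (hi | hx)
      · simp only at hi
        subst hi
        refine Prod.ext ?_ (congrFun e4 v)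
        by_cases hv : v ∈ E S
        · rw [(hE S v).1 hv, (hE T v).1 (e1 ▸ hv), e2]
        · rw [(hE S v).2 hv, (hE T v).2 (e1 ▸ hv), e3]
      · obtain ⟨i, hi⟩ := henum (A S) (hA S) _ hx
        have := congrFun e6 i
        simp only [← e5, hi] at this
        exact this
    apply Subtype.ext
    rw [hFS S, hFS T, hF]
  have : Finite (Fin (2 * n) →o Fin (2 * n)) :=
    Finite.of_injective (fun m => (m : Fin (2 * n) → Fin (2 * n))) DFunLike.coe_injective
  have h := Nat.card_le_card_of_injective _ hinj
  have hm := card_orderHom_le (2 * n)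
  refine h.trans ?_
  rw [Nat.card_prod, Nat.card_prod, Nat.card_prod, Nat.card_prod, Nat.card_prod]
  have c1 : Nat.card (Set (Fin (2 * n))) = 2 ^ (2 * n) := by simp
  have c4 : Nat.card (Fin (2 * n) → Fin 3) = 3 ^ (2 * n) := by simp
  have c5 : Nat.card (Finset (Fin (2 * n) × Fin 3)) = 2 ^ (2 * n * 3) := by simp
  have c6 : Nat.card (Fin n → Fin (2 * n) × Fin 3) = (2 * n * 3) ^ n := by simp
  rw [c1, c4, c5, c6]
  calc _ ≤ 2 ^ (2 * n) * (2 ^ (2 * (2 * n)) * (2 ^ (2 * (2 * n)) * (3 ^ (2 * n) *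
        (2 ^ (2 * n * 3) * (2 * n * 3) ^ n)))) := by gcongr
    _ = 3538944 ^ n * n ^ n := by
      have a1 : 2 ^ (2 * n) = 4 ^ n := by rw [pow_mul]; norm_num
      have a2 : 2 ^ (2 * (2 * n)) = 16 ^ n := by rw [← mul_assoc, pow_mul]; norm_num
      have a3 : 3 ^ (2 * n) = 9 ^ n := by rw [pow_mul]; norm_num
      have a4 : 2 ^ (2 * n * 3) = 64 ^ n := by
        rw [show 2 * n * 3 = 6 * n by ring, pow_mul]; norm_num
      rw [a1, a2, a3, a4, ← mul_pow, ← mul_pow, ← mul_pow, ← mul_pow, ← mul_pow, ← mul_pow]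
      congr 1
      ring

theorem Gset_card (n : ℕ) : (Gset n).ncard ≤ (2 * n).factorial * 729 ^ n := by
  classical
  choose! π hπ using fun (σ : Equiv.Perm (Fin (2 * n) × Fin 3)) (h : σ ∈ Gset n) => h
  let code : Gset n → Equiv.Perm (Fin (2 * n)) × (Fin (2 * n) → Fin 3 → Fin 3) :=
    fun σ => (π σ, fun v i => (σ.1 (v, i)).2)
  have hinj : Function.Injective code := by
    rintro ⟨σ, hσ⟩ ⟨τ, hτ⟩ h
    simp only [code, Prod.mk.injEq] at h
    apply Subtype.ext
    apply Equiv.ext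
    rintro ⟨v, i⟩
    refine Prod.ext ?_ (congrFun (congrFun h.2 v) i)
    simp only
    rw [hπ σ hσ, hπ τ hτ, h.1]
  have h := Nat.card_le_card_of_injective _ hinj
  rw [Nat.card_coe_set_eq] at h
  refine h.trans (le_of_eq ?_)
  rw [Nat.card_prod, Nat.card_perm]
  have : Nat.card (Fin (2 * n) → Fin 3 → Fin 3) = 729 ^ n := by
    simp only [Nat.card_eq_fintype_card, Fintype.card_fun, Fintype.card_fin]
    rw [pow_mul]; norm_num
  rw [this]
  simp

theorem Mset_card (n : ℕ) : (3 * n).factorial ≤ (Mset n).ncard := by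
  classical
  have e : Fin (2 * n) × Fin 3 ≃ Fin (3 * n) ⊕ Fin (3 * n) :=
    Fintype.equivOfCardEq (by simp; omega)
  let I : Equiv.Perm (Fin (3 * n)) → Equiv.Perm (Fin (3 * n) ⊕ Fin (3 * n)) := fun p =>
    ⟨Sum.elim (fun a => Sum.inr (p a)) (fun b => Sum.inl (p.symm b)),
      Sum.elim (fun a => Sum.inr (p a)) (fun b => Sum.inl (p.symm b)),
      by rintro (a | a) <;> simp, by rintro (a | a) <;> simp⟩
  have hII : ∀ p x, I p (I p x) = x := by
    rintro p (a | a) <;> simp [I]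
  have hIx : ∀ p x, I p x ≠ x := by
    rintro p (a | a) <;> simp [I]
  let J : Equiv.Perm (Fin (3 * n)) → Mset n := fun p => ⟨e.trans ((I p).trans e.symm), by
    constructor
    · ext1 x
      simp [hII]
    · intro x hx
      have hx' : e.symm (I p (e x)) = x := hx
      rw [Equiv.symm_apply_eq] at hx'
      exact hIx _ _ hx'⟩
  have hJ : Function.Injective J := by
    intro p q h
    have h1 : e.trans ((I p).trans e.symm) = e.trans ((I q).trans e.symm) :=
      congrArg Subtype.val h
    ext1 a
    have h2 := congrArg (fun r => r (e.symm (Sum.inl a))) h1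
    simpa [I] using h2
  have h := Nat.card_le_card_of_injective _ hJ
  rw [Nat.card_coe_set_eq, Nat.card_perm] at h
  simpa using h

theorem orbits_lower (n : ℕ) : n.factorial ≤ 729 ^ n * Nat.card (OrbitsSet n) := by
  classical
  have h1 : (Mset n).ncard ≤ (OrbitsSet n).ncard * (Gset n).ncard := by
    have hS : ∀ S : OrbitsSet n, ∃ f, (S : Set _) = {g | ∃ σ ∈ Gset n, σ * f * σ⁻¹ = g} := by
      rintro ⟨S, f, hf, rfl⟩
      exact ⟨f, rfl⟩
    choose F hF using hS
    let orb : Mset n → OrbitsSet n := fun f =>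
      ⟨{g | ∃ σ ∈ Gset n, σ * f.1 * σ⁻¹ = g}, f.1, f.2, rfl⟩
    have hex : ∀ f : Mset n, ∃ σ ∈ Gset n, σ * F (orb f) * σ⁻¹ = f.1 := by
      intro f
      have : f.1 ∈ (orb f : Set _) := ⟨1, ⟨1, fun _ => rfl⟩, by group⟩
      rw [hF] at this
      exact this
    choose s hs hs' using hex
    have hinj : Function.Injective
        (fun f : Mset n => ((orb f, ⟨s f, hs f⟩) : OrbitsSet n × Gset n)) := by
      intro f g hfg
      simp only [Prod.mk.injEq, Subtype.mk.injEq] at hfg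
      apply Subtype.ext
      rw [← hs' f, ← hs' g, hfg.1, hfg.2]
    have h := Nat.card_le_card_of_injective _ hinj
    rw [Nat.card_prod] at h
    simpa only [Nat.card_coe_set_eq] using h
  rw [Nat.card_coe_set_eq]
  have h2 := Mset_card n
  have h3 := Gset_card n
  have h4 : (2 * n).factorial * n.factorial ≤ (3 * n).factorial := by
    rw [show 3 * n = 2 * n + n by ring]
    exact Nat.le_of_dvd (Nat.factorial_pos _) (Nat.factorial_mul_factorial_dvd_factorial_add _ _)
  have h5 : (2 * n).factorial * n.factorial ≤
      (2 * n).factorial * (729 ^ n * (OrbitsSet n).ncard) := by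
    calc _ ≤ (OrbitsSet n).ncard * (Gset n).ncard := h4.trans (h2.trans h1)
      _ ≤ (OrbitsSet n).ncard * ((2 * n).factorial * 729 ^ n) := by gcongr
      _ = _ := by ring
  exact Nat.le_of_mul_le_mul_left h5 (Nat.factorial_pos _)

/-- There is a constant `c > 0` such that for every `n ≥ 1`, the number of orbits of the
conjugation action of `G_n` on `M_n` (equivalently, the number of isomorphism classes of
trivalent multigraphs with `2n` vertices) lies between `e^{-cn} · n^n` and `e^{cn} · n^n`. -/
theorem num_trivalent_graphs_asymptotics :
    ∃ c : ℝ, 0 < c ∧ ∀ n : ℕ, 1 ≤ n →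
      Real.exp (-c * n) * (n : ℝ) ^ n ≤ (Nat.card (OrbitsSet n) : ℝ) ∧
      (Nat.card (OrbitsSet n) : ℝ) ≤ Real.exp (c * n) * (n : ℝ) ^ n := by
  refine ⟨Real.log 3538944, Real.log_pos (by norm_num), fun n hn => ?_⟩
  have hexp : Real.exp (Real.log 3538944 * n) = (3538944 : ℝ) ^ n := by
    rw [mul_comm, Real.exp_nat_mul, Real.exp_log (by norm_num)]
  constructor
  · rw [neg_mul, Real.exp_neg, hexp, inv_mul_le_iff₀ (by positivity)]
    have h1 := Real.pow_div_factorial_le_exp (n : ℝ) (by positivity) n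
    rw [div_le_iff₀ (by positivity)] at h1
    have h2 : Real.exp (n : ℝ) ≤ 3 ^ n := by
      have := Real.exp_nat_mul 1 n
      rw [mul_one] at this
      rw [this]
      have h3 : Real.exp 1 ≤ 3 := by
        have := Real.exp_one_lt_d9
        linarith
      gcongr
    have h4 : (n.factorial : ℝ) ≤ 729 ^ n * (Nat.card (OrbitsSet n) : ℝ) := by
      exact_mod_cast orbits_lower n
    calc (n : ℝ) ^ n ≤ Real.exp n * n.factorial := h1
      _ ≤ 3 ^ n * (729 ^ n * (Nat.card (OrbitsSet n) : ℝ)) := by gcongr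
      _ = 2187 ^ n * (Nat.card (OrbitsSet n) : ℝ) := by
        rw [← mul_assoc, ← mul_pow]; norm_num
      _ ≤ 3538944 ^ n * (Nat.card (OrbitsSet n) : ℝ) := by gcongr; norm_num
  · rw [hexp]
    exact_mod_cast orbits_upper n hn
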